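/- For all positive integers a and b with a ≠ b, R⁺(a,b) < R⁺(⌊(a+b)/2⌋, ⌊(a+b)/2⌋). -/

import Mathlib

/-- The Beta function `B(a,b) = ∫₀¹ t^(a-1) (1-t)^(b-1) dt`. -/
noncomputable def betaFn (a b : ℝ) : ℝ := ∫ t in (0:ℝ)..1, t ^ (a - 1) * (1 - t) ^ (b - 1)

/-- `I(a,b)`: the probability that a `Beta(a,b)` random variable is `≥ 1/2`. -/
noncomputable def I (a b : ℝ) : ℝ :=
  (1 / betaFn a b) * ∫ t in (1/2 : ℝ)..1, t ^ (a - 1) * (1 - t) ^ (b - 1)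

/-- `h(x) = max (x, 1-x)`. -/
noncomputable def hFn (x : ℝ) : ℝ := max x (1 - x)

/-- Expected stage-wise reward. -/
noncomputable def R (a b : ℝ) : ℝ :=
  a / (a + b) * (hFn (I (a + 1) b) - hFn (I a b)) +
    b / (a + b) * (hFn (I a (b + 1)) - hFn (I a b))

/-- Optimistic knowledge-gradient reward. -/
noncomputable def Rplus (a b : ℝ) : ℝ :=
  max (hFn (I (a + 1) b) - hFn (I a b)) (hFn (I a (b + 1)) - hFn (I a b))

/-- Pessimistic knowledge-gradient reward. -/
noncomputable def Rminus (a b : ℝ) : ℝ :=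
  min (hFn (I (a + 1) b) - hFn (I a b)) (hFn (I a (b + 1)) - hFn (I a b))

lemma aux_cont (p q : ℕ) : Continuous (fun t : ℝ => t ^ p * (1 - t) ^ q) := by fun_prop

lemma aux_rec (x : ℝ) (p q : ℕ) :
    ((p:ℝ) + q + 2) * (∫ t in x..1, t ^ (p+1) * (1 - t) ^ q) =
      (p + 1) * (∫ t in x..1, t ^ p * (1 - t) ^ q) + x ^ (p+1) * (1 - x) ^ (q+1) := by
  have hd : ∀ t ∈ Set.uIcc x 1, HasDerivAt (fun t : ℝ => t ^ (p+1) * (1 - t) ^ (q+1))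
      (((p:ℝ)+1) * (t ^ p * (1 - t) ^ q) - ((p:ℝ)+q+2) * (t ^ (p+1) * (1-t)^q)) t := by
    intro t _
    have h1 := (hasDerivAt_id t).pow (p+1)
    have h2 := ((hasDerivAt_const t (1:ℝ)).sub (hasDerivAt_id t)).pow (q+1)
    have h3 := h1.mul h2
    refine h3.congr_deriv ?_
    simp
    ring
  have hi : ∀ p q : ℕ, IntervalIntegrable (fun t : ℝ => t ^ p * (1 - t) ^ q) MeasureTheory.volume x 1 :=
    fun p q => (aux_cont p q).intervalIntegrable _ _
  have h := intervalIntegral.integral_eq_sub_of_hasDerivAt hd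
    (((hi p q).const_mul _).sub ((hi (p+1) q).const_mul _))
  rw [intervalIntegral.integral_sub ((hi p q).const_mul _) ((hi (p+1) q).const_mul _),
    intervalIntegral.integral_const_mul, intervalIntegral.integral_const_mul] at h
  simp at h
  linarith

lemma aux_beta (p q : ℕ) :
    (∫ t in (0:ℝ)..1, t ^ p * (1 - t) ^ q) * ((p + 1) * ((p+q+1).choose (p+1) : ℕ)) = 1 := by
  induction p with
  | zero =>
    have h : (∫ t in (0:ℝ)..1, (1 - t) ^ q) = 1 / (q + 1) := by
      rw [intervalIntegral.integral_comp_sub_left (fun t => t ^ q) 1]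
      simp
    simp [h]
    field_simp
  | succ p ih =>
    have h := aux_rec 0 p q
    have hc := Nat.add_one_mul_choose_eq (p+q+1) (p+1)
    have e : p + 1 + q + 1 = p + q + 1 + 1 := by ring
    rw [e]
    have hc' : ((p:ℝ)+q+2) * ((p+q+1).choose (p+1) : ℕ) = ((p+q+1+1).choose (p+1+1) : ℕ) * (p+2) := by
      have := congrArg (Nat.cast (R := ℝ)) hc
      push_cast at this
      linarith
    simp at h
    push_cast
    refine Eq.trans ?_ ih
    linear_combination (((p+q+1).choose (p+1) : ℕ) : ℝ) * h
      - (∫ t in (0:ℝ)..1, t ^ (p+1) * (1 - t) ^ q) * hc'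

lemma aux_I (p q : ℕ) : I ((p+1 : ℕ) : ℝ) ((q+1 : ℕ) : ℝ) =
    (1 / ∫ t in (0:ℝ)..1, t ^ p * (1 - t) ^ q) * ∫ t in (1/2:ℝ)..1, t ^ p * (1 - t) ^ q := by
  simp [I, betaFn]

noncomputable def DD (a b : ℕ) : ℝ := ((a+b-1).choose a : ℕ) / 2 ^ (a+b)

lemma aux_pos (p q : ℕ) : (∫ t in (0:ℝ)..1, t ^ p * (1 - t) ^ q) ≠ 0 := by
  intro h
  have := aux_beta p q
  rw [h] at this
  simp at this

lemma I_succ (a b : ℕ) (ha : 0 < a) (hb : 0 < b) : I ((a:ℝ)+1) b = I a b + DD a b := by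
  obtain ⟨p, rfl⟩ : ∃ p, a = p + 1 := ⟨a-1, by omega⟩
  obtain ⟨q, rfl⟩ : ∃ p, b = p + 1 := ⟨b-1, by omega⟩
  have e : (((p+1:ℕ):ℝ)+1) = ((p+1+1 : ℕ) : ℝ) := by push_cast; ring
  rw [e, aux_I, aux_I]
  have h0 := aux_rec 0 p q
  have h1 := aux_rec (1/2) p q
  have hB := aux_beta p q
  have n0 := aux_pos p q
  have n1 := aux_pos (p+1) q
  unfold DD
  have e2 : p + 1 + (q + 1) - 1 = p + q + 1 := by omega
  rw [e2]
  simp only [zero_pow (Nat.succ_ne_zero p), zero_mul, add_zero] at h0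
  have e3 : ((1:ℝ)/2)^(p+1) * (1 - 1/2)^(q+1) = 1 / 2 ^ (p+1+(q+1)) := by
    rw [show (1:ℝ) - 1/2 = 1/2 by norm_num, ← pow_add, div_pow, one_pow]
  rw [e3] at h1
  generalize (∫ t in (0:ℝ)..1, t ^ p * (1 - t) ^ q) = B at *
  generalize (∫ t in (0:ℝ)..1, t ^ (p+1) * (1 - t) ^ q) = B' at *
  generalize (∫ t in (1/2:ℝ)..1, t ^ p * (1 - t) ^ q) = F at *
  generalize (∫ t in (1/2:ℝ)..1, t ^ (p+1) * (1 - t) ^ q) = F' at *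
  generalize (((p+q+1).choose (p+1) : ℕ) : ℝ) = C at *
  have hs : (0:ℝ) < p + q + 2 := by positivity
  rw [div_eq_mul_one_div C]
  generalize (1:ℝ) / 2 ^ (p+1+(q+1)) = u at *
  have hp : (0:ℝ) < p + 1 := by positivity
  have hB' : B' = (p+1) * B / (p+q+2) := by field_simp; linarith
  have hF' : F' = ((p+1) * F + u) / (p+q+2) := by field_simp; linarith
  have hC : C = 1 / (B * (p+1)) := by field_simp; linarith
  rw [hB', hF', hC]
  field_simp

lemma I_symm (a b : ℕ) (ha : 0 < a) (hb : 0 < b) : I (b:ℝ) a = 1 - I a b := by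
  obtain ⟨p, rfl⟩ : ∃ p, a = p + 1 := ⟨a-1, by omega⟩
  obtain ⟨q, rfl⟩ : ∃ p, b = p + 1 := ⟨b-1, by omega⟩
  rw [aux_I, aux_I]
  have h1 : (∫ t in (0:ℝ)..1, t ^ q * (1 - t) ^ p) = ∫ t in (0:ℝ)..1, t ^ p * (1 - t) ^ q := by
    have := intervalIntegral.integral_comp_sub_left (a := 0) (b := 1) (fun t : ℝ => t ^ p * (1-t) ^ q) 1
    simp only [sub_sub_cancel, sub_self, sub_zero] at this
    rw [← this]
    simp only [mul_comm]
  have h2 : (∫ t in (1/2:ℝ)..1, t ^ q * (1 - t) ^ p) = ∫ t in (0:ℝ)..(1/2), t ^ p * (1 - t) ^ q := by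
    have := intervalIntegral.integral_comp_sub_left (a := 1/2) (b := 1) (fun t : ℝ => t ^ p * (1-t) ^ q) 1
    simp only [sub_sub_cancel, sub_self] at this
    rw [show (1:ℝ) - 1/2 = 1/2 by norm_num] at this
    rw [← this]
    simp only [mul_comm]
  have h3 := intervalIntegral.integral_add_adjacent_intervals
    ((aux_cont p q).intervalIntegrable (μ := MeasureTheory.volume) 0 (1/2))
    ((aux_cont p q).intervalIntegrable (μ := MeasureTheory.volume) (1/2) 1)
  have n0 := aux_pos p q
  rw [h1, h2]
  field_simp
  linarith

lemma I_succ_right (a b : ℕ) (ha : 0 < a) (hb : 0 < b) : I (a:ℝ) (b+1) = I a b - DD b a := by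
  have h1 := I_symm (b+1) a (by omega) ha
  have h2 := I_symm b a hb ha
  have h3 := I_succ b a hb ha
  push_cast at h1
  linarith

lemma I_diag (a : ℕ) (ha : 0 < a) : I (a:ℝ) a = 1/2 := by
  have := I_symm a a ha ha
  linarith

lemma DD_nonneg (a b : ℕ) : 0 ≤ DD a b := by unfold DD; positivity

lemma I_ge (a b : ℕ) (hb : 0 < b) (h : b ≤ a) : 1/2 ≤ I (a:ℝ) b := by
  induction a, h using Nat.le_induction with
  | base => rw [I_diag b hb]
  | succ n hn ih =>
    have := I_succ n b (by omega) hb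
    have := DD_nonneg n b
    push_cast
    linarith

lemma hFn_of_ge {x : ℝ} (h : 1/2 ≤ x) : hFn x = x := max_eq_left (by linarith)

lemma hFn_symm (x : ℝ) : hFn (1 - x) = hFn x := by
  unfold hFn; rw [sub_sub_cancel, max_comm]

lemma Rplus_gt (a b : ℕ) (hb : 0 < b) (h : b < a) : Rplus a b = DD a b := by
  have h1 := I_succ a b (by omega) hb
  have h2 := I_succ_right a b (by omega) hb
  have h3 := I_ge a b hb h.le
  have h4 := I_ge a (b+1) (by omega) h
  push_cast at h4
  have := DD_nonneg a b
  have := DD_nonneg b a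
  unfold Rplus
  rw [hFn_of_ge h3, hFn_of_ge h4, hFn_of_ge (by linarith), h1, h2, max_eq_left] <;> linarith

lemma Rplus_diag (a : ℕ) (ha : 0 < a) : Rplus a a = DD a a := by
  have h1 := I_succ a a ha ha
  have h2 := I_succ_right a a ha ha
  have h3 := I_diag a ha
  have := DD_nonneg a a
  unfold Rplus
  rw [h1, h2, h3]
  have : (1/2 : ℝ) - DD a a = 1 - (1/2 + DD a a) := by ring
  rw [this, hFn_symm, max_self, hFn_of_ge (by linarith), hFn_of_ge le_rfl]
  ring

lemma Rplus_symm (a b : ℕ) (ha : 0 < a) (hb : 0 < b) : Rplus a b = Rplus b a := by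
  have h1 := I_symm (a+1) b (by omega) hb
  have h2 := I_symm a (b+1) ha (by omega)
  have h3 := I_symm a b ha hb
  push_cast at h1 h2
  unfold Rplus
  rw [h1, h2, h3, hFn_symm, hFn_symm, hFn_symm, max_comm]

lemma choose_anti (n k : ℕ) (h : n < 2 * k + 1) (hk : k ≤ n) : n.choose (k+1) < n.choose k := by
  have h1 := Nat.choose_succ_right_eq n k
  have h2 : 0 < n.choose k := Nat.choose_pos hk
  by_contra hc
  push Not at hc
  have : n.choose k * (n - k) < n.choose k * (k+1) := Nat.mul_lt_mul_of_pos_left (by omega) h2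
  nlinarith

lemma choose_anti' (n k j : ℕ) (h : n < 2 * k + 1) (hk : k ≤ n) (hj : k < j) :
    n.choose j < n.choose k := by
  induction j, hj using Nat.le_induction with
  | base => exact choose_anti n k h hk
  | succ m hm ih =>
    rcases Nat.lt_or_ge n m with hh | hh
    · rw [Nat.choose_eq_zero_of_lt (by omega)]; exact Nat.choose_pos hk
    · exact (choose_anti n m (by omega) hh).trans ih

lemma main_gt (a b : ℕ) (hb : 0 < b) (h : b < a) :
    Rplus a b < Rplus (((a + b) / 2 : ℕ) : ℝ) (((a + b) / 2 : ℕ) : ℝ) := by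
  rw [Rplus_gt a b hb h, Rplus_diag _ (by omega)]
  unfold DD
  obtain ⟨m, hm⟩ := Nat.even_or_odd' (a+b)
  have hm2 : (a+b)/2 = m := by omega
  rw [hm2]
  rcases hm with hm | hm <;> rw [hm, ← two_mul]
  · have := choose_anti' (2*m-1) m a (by omega) (by omega) (by omega)
    gcongr
  · have h1 := choose_anti' (2*m) m a (by omega) (by omega) (by omega)
    have h2 : (2*m).choose m = 2 * (2*m-1).choose m := by
      obtain ⟨k, rfl⟩ : ∃ k, m = k + 1 := ⟨m-1, by omega⟩
      have e : 2*(k+1)-1 = 2*k+1 := by omega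
      rw [e, show 2*(k+1) = 2*k+1+1 by ring, Nat.choose_succ_succ, Nat.choose_symm_half]
      ring
    rw [h2] at h1
    have h3 : (((2*m).choose a : ℕ):ℝ) < 2 * ((2*m-1).choose m : ℕ) := by exact_mod_cast h1
    rw [Nat.add_sub_cancel, pow_succ, div_lt_div_iff₀ (by positivity) (by positivity)]
    have : (0:ℝ) < 2^(2*m) := by positivity
    nlinarith

theorem Rplus_lt_diag (a b : ℕ) (ha : 0 < a) (hb : 0 < b) (hab : a ≠ b) :
    Rplus a b < Rplus (((a + b) / 2 : ℕ) : ℝ) (((a + b) / 2 : ℕ) : ℝ) := by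
  rcases lt_or_gt_of_ne hab with h | h
  · rw [Rplus_symm a b ha hb, add_comm a b]
    exact main_gt b a ha h
  · exact main_gt a b hb h
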